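/- arXiv:1705.06434 — 5 statements merged into one kernel-verified Lean document; each statement's English description precedes it below -/
import Mathlib

section
/- Let n, m, c, M be nonnegative integers with M ≥ n + m. Then in ℤ[q] one has Σ_{i=0}^{c} q^{i(m+n+1)} · [M−m−n+i−1 choose i] · [n+c−i choose n] · [n+m+c−i choose m] = [n+m choose n] · [M+c choose c]. -/
/-!
Statement 0: a q-binomial identity (paper's Lemma on trivalent trees).
We work in the field ℚ(q) of rational functions (`RatFunc ℚ`), where the quantum
integer, quantum factorial and Gaussian binomial coefficient are defined by the
usual formulas.  All quantities appearing are in fact polynomials in q, so the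
identity in ℚ(q) is equivalent to the identity in ℤ[q].
-/

open scoped BigOperators

noncomputable section

/-- The field ℚ(q). -/
abbrev K : Type := RatFunc ℚ

/-- The variable q. -/
def qq : K := RatFunc.X

/-- The quantum integer [n] = 1 + q + ⋯ + q^{n-1}. -/
def qint (n : ℕ) : K := ∑ i ∈ Finset.range n, qq ^ i

/-- The quantum factorial [n]! = [1][2]⋯[n]. -/
def qfact (n : ℕ) : K := ∏ i ∈ Finset.range n, qint (i + 1)

/-- The Gaussian binomial coefficient [n choose k] = [n]!/([k]!·[n-k]!),
with the convention that it is 0 when k > n. -/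
def qbinom (n k : ℕ) : K :=
  if k ≤ n then qfact n / (qfact k * qfact (n - k)) else 0

theorem qint_ne (n : ℕ) : qint (n + 1) ≠ 0 := by
  have h : qint (n + 1) = algebraMap (Polynomial ℚ) K
      (∑ i ∈ Finset.range (n + 1), Polynomial.X ^ i) := by
    simp [qint, qq, map_sum, map_pow]
  rw [h]
  intro h0
  have h1 := (map_eq_zero_iff _ (RatFunc.algebraMap_injective ℚ)).1 h0
  have h2 := congrArg (Polynomial.eval 1) h1
  simp [Polynomial.eval_finsetSum] at h2
  exact absurd h2 (by positivity)

theorem qfact_ne (n : ℕ) : qfact n ≠ 0 :=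
  Finset.prod_ne_zero_iff.2 fun i _ => qint_ne i

theorem qfact_succ (n : ℕ) : qfact (n + 1) = qfact n * qint (n + 1) :=
  Finset.prod_range_succ _ _

theorem qfact_zero : qfact 0 = 1 := rfl

theorem qint_add (a b : ℕ) : qint (a + b) = qint a + qq ^ a * qint b := by
  simp [qint, Finset.sum_range_add, Finset.mul_sum, pow_add]

theorem qbinom_add (a b : ℕ) : qbinom (a + b) b = qfact (a + b) / (qfact b * qfact a) := by
  simp [qbinom]

theorem qbinom_zero (a : ℕ) : qbinom a 0 = 1 := by
  simp [qbinom, qfact_zero, qfact_ne]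

theorem pascal (A i : ℕ) :
    qbinom (A + (i + 1)) (i + 1) = qbinom (A + i) (i + 1) + qq ^ A * qbinom (A + i) i := by
  rw [qbinom_add, qbinom_add]
  have h1 := qfact_ne i
  have h3 := qint_ne i
  rcases A with _ | A
  · simp [qbinom, qfact_zero, qfact_ne]
  · have e : A + 1 + i = A + (i + 1) := by ring
    have e2 : A + 1 + (i + 1) = (A + (i + 1)) + 1 := by ring
    have e3 : qint (A + (i + 1) + 1) = qint (A + 1) + qq ^ (A + 1) * qint (i + 1) := by
      rw [← qint_add]; congr 1; ring
    have h2 := qfact_ne A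
    have h4 := qint_ne A
    rw [e, qbinom_add, e2, qfact_succ (A + (i + 1)), e3, qfact_succ A, qfact_succ i]
    field_simp

theorem vander (N A c : ℕ) :
    ∑ i ∈ Finset.range (c + 1),
      qq ^ (i * (N + 1)) * qbinom (A + i - 1) i * qbinom (N + (c - i)) (c - i)
      = qbinom (A + N + c) c := by
  induction A generalizing c with
  | zero =>
    rw [Finset.sum_range_succ', Finset.sum_eq_zero]
    · simp [qbinom_zero]
    · intro i _
      simp [qbinom]
  | succ A ihA =>
    induction c with
    | zero => simp [qbinom_zero]
    | succ c ihc =>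
      have key : qbinom (A + 1 + N + (c + 1)) (c + 1) =
          qbinom (A + N + (c + 1)) (c + 1)
            + qq ^ (A + N + 1) * qbinom (A + 1 + N + c) c := by
        have := pascal (A + N + 1) c
        rw [show A + 1 + N + (c + 1) = A + N + 1 + (c + 1) by ring, this,
          show A + N + 1 + c = A + N + (c + 1) by ring,
          show A + 1 + N + c = A + N + (c + 1) by ring]
      rw [key, ← ihA (c + 1), ← ihc, Finset.sum_range_succ', Finset.sum_range_succ' _ (c + 1),
        Finset.mul_sum, add_right_comm (_ : K), ← Finset.sum_add_distrib]
      congr 1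
      · apply Finset.sum_congr rfl
        intro i _
        have := pascal A i
        rw [show A + 1 + (i + 1) - 1 = A + (i + 1) by omega, this,
          show A + (i + 1) - 1 = A + i by omega, show A + 1 + i - 1 = A + i by omega,
          show c + 1 - (i + 1) = c - i by omega]
        ring
      · simp [qbinom_zero]

theorem stmt_0 (n m c M : ℕ) (hM : n + m ≤ M) :
    ∑ i ∈ Finset.range (c + 1),
        qq ^ (i * (m + n + 1)) * qbinom (M - m - n + i - 1) i *
          qbinom (n + c - i) n * qbinom (n + m + c - i) m
      = qbinom (n + m) n * qbinom (M + c) c := by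
  obtain ⟨A, rfl⟩ := Nat.exists_eq_add_of_le hM
  have h := vander (n + m) A c
  rw [show n + m + A + c = A + (n + m) + c by ring, ← h, Finset.mul_sum]
  apply Finset.sum_congr rfl
  intro i hi
  obtain ⟨d, rfl⟩ := Nat.exists_eq_add_of_le (Nat.lt_succ_iff.1 (Finset.mem_range.1 hi))
  rw [show n + m + A - m - n + i - 1 = A + i - 1 by omega,
    show n + (i + d) - i = d + n by omega, show n + m + (i + d) - i = (d + n) + m by omega,
    show i + d - i = d by omega, qbinom_add, qbinom_add, qbinom_add,
    add_comm n m, qbinom_add, show m + n + d = d + n + m by ring]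
  have h1 := qfact_ne n
  have h2 := qfact_ne m
  have h3 := qfact_ne d
  have h4 := qfact_ne (d + n)
  have h5 := qfact_ne (m + n)
  field_simp
end
end

section
/- For all integers M, N the rational function P(M,N) satisfies the recurrence relations: if M ≥ 2 is even and N ≥ 1, then P(M,N) = P(M,N−1) + q^N · P(M−1,N); and if M ≥ 1 is odd and N ≥ 2, then P(M,N) = P(M,N−1) + q^N · P(M−1,N) + q^{M+N} · P(M+1,N−2). -/
open scoped BigOperators

noncomputable section

/-- a_{(2m-1,N)} = [N+2m]/[2m] and a_{(2m,N)} = [2N+2m]/[N+2m]: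
for odd j = 2m-1 this is [N+j+1]/[j+1], for even j = 2m this is [2N+j]/[N+j]. -/
def aB (j N : ℕ) : K :=
  if Odd j then qint (N + j + 1) / qint (j + 1) else qint (2 * N + j) / qint (N + j)

/-- P(M,N) = ∏_{i=1}^{N}(1+q^i) · ∏_{j=1}^{M} a_{(j,N)}. -/
def P (M N : ℕ) : K :=
  (∏ i ∈ Finset.range N, (1 + qq ^ (i + 1))) * ∏ j ∈ Finset.range M, aB (j + 1) N

lemma one_sub_ne (n : ℕ) : (1 : K) - qq ^ (n + 1) ≠ 0 := by
  intro h
  have h1 : (algebraMap (Polynomial ℚ) K) (1 - Polynomial.X ^ (n + 1)) = 0 := by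
    simpa [qq] using h
  have h2 := (map_eq_zero_iff _ (RatFunc.algebraMap_injective ℚ)).1 h1
  have h3 := congrArg (Polynomial.eval 0) h2
  simp at h3

lemma qint_eq (n : ℕ) : qint n = (1 - qq ^ n) / (1 - qq) := by
  have h : (1 : K) - qq ≠ 0 := by simpa using one_sub_ne 0
  rw [eq_div_iff h, qint]
  exact geom_sum_mul_neg qq n

lemma qdiv (a b : ℕ) : qint a / qint b = (1 - qq ^ a) / (1 - qq ^ b) := by
  have h : (1 : K) - qq ≠ 0 := by simpa using one_sub_ne 0
  rw [qint_eq, qint_eq, div_div_div_cancel_right₀ h]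

lemma P_odd (m N : ℕ) : P (2 * m + 1) N * (1 - qq ^ (2 * m + 2))
    = P (2 * m) N * (1 - qq ^ (N + 2 * m + 2)) := by
  have h := one_sub_ne (2 * m + 1)
  have ho : Odd (2 * m + 1) := ⟨m, rfl⟩
  rw [P, Finset.prod_range_succ, aB, if_pos ho, qdiv, P]
  rw [show N + (2 * m + 1) + 1 = N + 2 * m + 2 by ring]
  rw [← mul_assoc, mul_assoc, div_mul_cancel₀ _ h]

lemma P_even (m N : ℕ) : P (2 * m + 2) N * (1 - qq ^ (N + 2 * m + 2))
    = P (2 * m + 1) N * (1 - qq ^ (2 * N + 2 * m + 2)) := by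
  have h := one_sub_ne (N + 2 * m + 1)
  have ho : ¬ Odd (2 * m + 1 + 1) := by
    rw [Nat.not_odd_iff_even]; exact ⟨m + 1, by ring⟩
  rw [P, Finset.prod_range_succ, aB, if_neg ho, qdiv, P]
  rw [show N + (2 * m + 1 + 1) = N + 2 * m + 2 by ring,
    show 2 * N + (2 * m + 1 + 1) = 2 * N + 2 * m + 2 by ring]
  rw [← mul_assoc, mul_assoc, div_mul_cancel₀ _ h]

lemma P_two (m N : ℕ) : P (2 * m + 2) N * (1 - qq ^ (2 * m + 2))
    = P (2 * m) N * (1 - qq ^ (2 * N + 2 * m + 2)) := by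
  apply mul_right_cancel₀ (one_sub_ne (N + 2 * m + 1))
  linear_combination (1 - qq ^ (2 * m + 2)) * P_even m N
    + (1 - qq ^ (2 * N + 2 * m + 2)) * P_odd m N

lemma P_N (m N : ℕ) : P (2 * m) (N + 1) * (1 - qq ^ (N + 1))
    = P (2 * m) N * (1 - qq ^ (2 * N + 2 * m + 2)) := by
  induction m with
  | zero =>
    simp only [P, Finset.prod_range_succ, mul_zero, Finset.prod_range_zero]
    ring
  | succ m ih =>
    have h1 := P_two m N
    have h2 := P_two m (N + 1)
    rw [show 2 * (m + 1) = 2 * m + 2 by ring]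
    apply mul_right_cancel₀ (one_sub_ne (2 * m + 1))
    linear_combination (1 - qq ^ (N + 1)) * h2 +
      (1 - qq ^ (2 * (N + 1) + 2 * m + 2)) * ih - (1 - qq ^ (2 * N + 2 * m + 4)) * h1

theorem stmt_3 (M N : ℕ) :
    (Even M → 2 ≤ M → 1 ≤ N →
      P M N = P M (N - 1) + qq ^ N * P (M - 1) N) ∧
    (Odd M → 1 ≤ M → 2 ≤ N →
      P M N = P M (N - 1) + qq ^ N * P (M - 1) N + qq ^ (M + N) * P (M + 1) (N - 2)) := by
  constructor
  · intro hM h2 h1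
    obtain ⟨m, rfl⟩ : ∃ m, M = 2 * m + 2 := by
      obtain ⟨k, hk⟩ := hM
      exact ⟨k - 1, by omega⟩
    obtain ⟨n, rfl⟩ : ∃ n, N = n + 1 := ⟨N - 1, by omega⟩
    rw [show 2 * m + 2 - 1 = 2 * m + 1 by omega, show n + 1 - 1 = n by omega]
    have e1 := P_N (m + 1) n
    rw [show 2 * (m + 1) = 2 * m + 2 by ring] at e1
    have e2 := P_even m (n + 1)
    apply mul_right_cancel₀ (one_sub_ne (2 * (n + 1) + 2 * m + 1))
    linear_combination e1 + qq ^ (n + 1) * e2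
  · intro hM _ h2
    obtain ⟨m, rfl⟩ := hM
    obtain ⟨n, rfl⟩ : ∃ n, N = n + 2 := ⟨N - 2, by omega⟩
    rw [show 2 * m + 1 - 1 = 2 * m by omega, show n + 2 - 1 = n + 1 by omega, show n + 2 - 2 = n by omega,
      show 2 * m + 1 + 1 = 2 * m + 2 by ring]
    have n1 := one_sub_ne (2 * m + 1)
    have n2 := one_sub_ne n
    have n3 := one_sub_ne (n + 1)
    have a1 := eq_div_of_mul_eq n1 (P_odd m (n + 2))
    have a2 := eq_div_of_mul_eq n1 (P_odd m (n + 1))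
    have a3 := eq_div_of_mul_eq n1 (P_two m n)
    have a4 := eq_div_of_mul_eq n3 (P_N m (n + 1))
    have a5 := eq_div_of_mul_eq n2 (P_N m n)
    rw [a1, a2, a3, a4, a5]
    generalize P (2 * m) n = A
    have k1 : (1 : K) - qq ^ (2 * m + 1 + 1) = 1 - (qq ^ m) ^ 2 * qq ^ 2 := by ring
    have k2 : (1 : K) - qq ^ (n + 1) = 1 - qq ^ n * qq := by ring
    have k3 : (1 : K) - qq ^ (n + 1 + 1) = 1 - qq ^ n * qq ^ 2 := by ring
    rw [k1] at n1
    rw [k2] at n2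
    rw [k3] at n3
    have k1' : (1 : K) - qq ^ (2 * m + 2) = 1 - (qq ^ m) ^ 2 * qq ^ 2 := by ring
    rw [k1', k2, k3]
    rw [show qq ^ (n + 2 + 2 * m + 2) = qq ^ n * (qq ^ m) ^ 2 * qq ^ 4 by ring,
      show qq ^ (2 * (n + 1) + 2 * m + 2) = (qq ^ n) ^ 2 * (qq ^ m) ^ 2 * qq ^ 4 by ring,
      show qq ^ (2 * n + 2 * m + 2) = (qq ^ n) ^ 2 * (qq ^ m) ^ 2 * qq ^ 2 by ring,
      show qq ^ (n + 1 + 2 * m + 2) = qq ^ n * (qq ^ m) ^ 2 * qq ^ 3 by ring,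
      show qq ^ (2 * m + 1 + (n + 2)) = qq ^ n * (qq ^ m) ^ 2 * qq ^ 3 by ring,
      show qq ^ (n + 2) = qq ^ n * qq ^ 2 by ring]
    generalize qq ^ n = x at *
    generalize qq ^ m = y at *
    generalize qq = q at *
    field_simp
    ring
end
end

section
/- Let N be an odd positive integer. The number of permutations w of {1, 2, …, N+1} satisfying w(2m−1) > w(2m) for all m with 2m ≤ N+1, w(2m) < w(2m+1) for all m with 2m+1 ≤ N+1, and w(2m) < w(2m+2) for all m with 2m+2 ≤ N+1, equals the double factorial N!! = N·(N−2)·(N−4)⋯1. -/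
def DUValid (n : ℕ) (w : Equiv.Perm (Fin n)) : Prop :=
  (∀ i j : Fin n, (j : ℕ) = (i : ℕ) + 1 →
      (Even (i : ℕ) → w j < w i) ∧ (Odd (i : ℕ) → w i < w j)) ∧
  (∀ i j : Fin n, (j : ℕ) = (i : ℕ) + 2 → Odd (i : ℕ) → w i < w j)

def duFun {n : ℕ} (v : Fin (n + 1)) (s : Equiv.Perm (Fin n)) : Fin (n + 2) → Fin (n + 2) :=
  Fin.cons v.succ (Fin.cons 0 (fun i => (v.succAbove (s i)).succ))

theorem duFun_zero {n : ℕ} (v : Fin (n + 1)) (s : Equiv.Perm (Fin n)) :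
    duFun v s 0 = v.succ := rfl

theorem duFun_one {n : ℕ} (v : Fin (n + 1)) (s : Equiv.Perm (Fin n)) :
    duFun v s (Fin.succ 0) = 0 := rfl

theorem duFun_ss {n : ℕ} (v : Fin (n + 1)) (s : Equiv.Perm (Fin n)) (i : Fin n) :
    duFun v s i.succ.succ = (v.succAbove (s i)).succ := rfl

theorem duFun_inj {n : ℕ} (v : Fin (n + 1)) (s : Equiv.Perm (Fin n)) :
    Function.Injective (duFun v s) := by
  unfold duFun
  rw [Fin.cons_injective_iff, Fin.cons_injective_iff]
  refine ⟨?_, ?_, ?_⟩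
  · rintro ⟨x, hx⟩
    induction x using Fin.cases with
    | zero => exact (Fin.succ_ne_zero _ hx.symm)
    | succ i => exact Fin.succAbove_ne v (s i) (Fin.succ_injective _ hx)
  · rintro ⟨x, hx⟩
    exact Fin.succ_ne_zero _ hx
  · intro a b h
    exact s.injective (Fin.succAbove_right_injective (Fin.succ_injective _ h))

noncomputable def duPerm {n : ℕ} (v : Fin (n + 1)) (s : Equiv.Perm (Fin n)) :
    Equiv.Perm (Fin (n + 2)) :=
  Equiv.ofBijective (duFun v s) (Finite.injective_iff_bijective.mp (duFun_inj v s))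

theorem duPerm_apply {n : ℕ} (v : Fin (n + 1)) (s : Equiv.Perm (Fin n)) (i) :
    duPerm v s i = duFun v s i := rfl

theorem duPerm_valid {n : ℕ} (v : Fin (n + 1)) (s : Equiv.Perm (Fin n)) :
    DUValid (n + 2) (duPerm v s) ↔ DUValid n s := by
  constructor
  · rintro ⟨h1, h2⟩
    refine ⟨fun i j hij => ?_, fun i j hij hi => ?_⟩
    · have := h1 i.succ.succ j.succ.succ (by simp [hij])
      simp only [duPerm_apply, duFun_ss, Fin.succ_lt_succ_iff, Fin.succAbove_lt_succAbove_iff,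
        Fin.val_succ] at this
      refine ⟨fun h => this.1 (by grind), fun h => this.2 (by grind)⟩
    · have := h2 i.succ.succ j.succ.succ (by simp [hij])
      simp only [duPerm_apply, duFun_ss, Fin.succ_lt_succ_iff, Fin.succAbove_lt_succAbove_iff,
        Fin.val_succ] at this
      exact this (by grind)
  · rintro ⟨h1, h2⟩
    refine ⟨fun i j hij => ?_, fun i j hij hi => ?_⟩
    · induction i using Fin.cases with
      | zero =>
        obtain rfl : j = Fin.succ 0 := Fin.ext (by simpa using hij)
        simp only [duPerm_apply, duFun_one, duFun_zero]
        exact ⟨fun _ => Fin.succ_pos _, fun h => by simp at h⟩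
      | succ i =>
      induction j using Fin.cases with
      | zero => simp at hij
      | succ j =>
      induction j using Fin.cases with
      | zero => simp at hij
      | succ j =>
      induction i using Fin.cases with
      | zero => 
        simp only [duPerm_apply, duFun_one, duFun_ss]
        exact ⟨fun h => by simp at h, fun _ => Fin.succ_pos _⟩
      | succ i =>
      have := h1 i j (by simpa using hij)
      simp only [duPerm_apply, duFun_ss, Fin.succ_lt_succ_iff, Fin.succAbove_lt_succAbove_iff,
        Fin.val_succ]
      refine ⟨fun h => this.1 (by grind), fun h => this.2 (by grind)⟩
    · induction i using Fin.cases with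
      | zero => simp at hi
      | succ i =>
      induction j using Fin.cases with
      | zero => simp at hij
      | succ j =>
      induction j using Fin.cases with
      | zero => simp at hij
      | succ j =>
      induction i using Fin.cases with
      | zero =>
        simp only [duPerm_apply, duFun_one, duFun_ss]
        exact Fin.succ_pos _
      | succ i =>
      simp only [duPerm_apply, duFun_ss, Fin.succ_lt_succ_iff, Fin.succAbove_lt_succAbove_iff]
      exact h2 i j (by simpa using hij) (by simp only [Fin.val_succ] at hi; grind)

theorem du_one {n : ℕ} (hn : Even n) (w : Equiv.Perm (Fin (n + 2))) (hw : DUValid (n + 2) w) :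
    w (Fin.succ 0) = 0 := by
  obtain ⟨j, hj⟩ := w.surjective 0
  rcases Nat.even_or_odd (j : ℕ) with he | ho
  · have hlt : (j : ℕ) + 1 < n + 2 := by have := j.2; grind
    have := (hw.1 j ⟨j + 1, hlt⟩ rfl).1 he
    rw [hj] at this
    exact absurd this (Fin.not_lt_zero _)
  · by_cases h1 : (j : ℕ) = 1
    · rw [← hj]; congr 1; exact Fin.ext (by simp [h1])
    · have h3 : 2 ≤ (j : ℕ) := by grind
      have := hw.2 ⟨j - 2, by omega⟩ j (by simp; omega) (by simp; grind)
      rw [hj] at this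
      exact absurd this (Fin.not_lt_zero _)

theorem duPerm_surj {n : ℕ} (hn : Even n) (w : Equiv.Perm (Fin (n + 2)))
    (hw : DUValid (n + 2) w) : ∃ v s, duPerm v s = w := by
  have h1 := du_one hn w hw
  have h0 : w 0 ≠ 0 := by
    exact fun h => Fin.succ_ne_zero _ (w.injective (h1.trans h.symm))
  obtain ⟨v, hv⟩ := Fin.exists_succ_eq.mpr h0
  have hs : ∀ i : Fin n, ∃ k : Fin n, (v.succAbove k).succ = w i.succ.succ := by
    intro i
    have ha : w i.succ.succ ≠ 0 := by
      rw [← h1]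
      exact fun h => Fin.succ_ne_zero _ (Fin.succ_injective _ (w.injective h))
    obtain ⟨u, hu⟩ := Fin.exists_succ_eq.mpr ha
    have hb : u ≠ v := by
      rintro rfl
      exact Fin.succ_ne_zero _ (w.injective (hu.symm.trans hv))
    obtain ⟨k, hk⟩ := Fin.exists_succAbove_eq hb
    exact ⟨k, by rw [hk, hu]⟩
  choose s hs using hs
  have hinj : Function.Injective s := by
    intro a b h
    have := hs a
    rw [h, hs b] at this
    exact (Fin.succ_injective _ (Fin.succ_injective _ (w.injective this))).symm
  refine ⟨v, Equiv.ofBijective s (Finite.injective_iff_bijective.mp hinj), ?_⟩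
  ext1 i
  rw [duPerm_apply]
  induction i using Fin.cases with
  | zero => exact hv
  | succ i =>
  induction i using Fin.cases with
  | zero => exact h1.symm
  | succ i => exact hs i

theorem duPerm_inj {n : ℕ} {v v' : Fin (n + 1)} {s s' : Equiv.Perm (Fin n)}
    (h : duPerm v s = duPerm v' s') : v = v' ∧ s = s' := by
  have hv : v = v' := Fin.succ_injective _ (congrArg (fun w => w 0) h)
  subst hv
  refine ⟨rfl, ?_⟩
  ext1 i
  have : duPerm v s i.succ.succ = duPerm v s' i.succ.succ := by rw [h]
  exact Fin.succAbove_right_injective (Fin.succ_injective _ this)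

theorem du_card_step {n : ℕ} (hn : Even n) :
    Nat.card {w // DUValid (n + 2) w} = (n + 1) * Nat.card {w // DUValid n w} := by
  have : Nat.card (Fin (n + 1) × {w // DUValid n w}) = Nat.card {w // DUValid (n + 2) w} := by
    refine Nat.card_congr (Equiv.ofBijective
      (fun p => ⟨duPerm p.1 p.2.1, (duPerm_valid _ _).mpr p.2.2⟩) ⟨?_, ?_⟩)
    · rintro ⟨v, s, hs⟩ ⟨v', s', hs'⟩ h
      obtain ⟨rfl, rfl⟩ := duPerm_inj (Subtype.ext_iff.mp h)
      rfl
    · rintro ⟨w, hw⟩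
      obtain ⟨v, s, rfl⟩ := duPerm_surj hn w hw
      exact ⟨⟨v, s, (duPerm_valid _ _).mp hw⟩, rfl⟩
  rw [← this, Nat.card_prod, Nat.card_fin]

theorem du_card (k : ℕ) :
    Nat.card {w // DUValid (2 * k + 2) w} = Nat.doubleFactorial (2 * k + 1) := by
  induction k with
  | zero =>
    rw [du_card_step (by simp)]
    have : Unique {w // DUValid (2 * 0) w} :=
      { default := ⟨1, fun i => i.elim0, fun i => i.elim0⟩
        uniq := fun a => Subtype.ext (Equiv.ext fun i => i.elim0) }
    rw [Nat.card_unique]; rfl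
  | succ k ih =>
    rw [du_card_step (by simp), show 2 * (k + 1) = 2 * k + 2 by ring, ih]
    rfl

theorem stmt_7 (N : ℕ) (hodd : Odd N) (hpos : 0 < N) :
    Nat.card {w : Equiv.Perm (Fin (N + 1)) //
        (∀ i j : Fin (N + 1), (j : ℕ) = (i : ℕ) + 1 →
            (Even (i : ℕ) → w j < w i) ∧ (Odd (i : ℕ) → w i < w j)) ∧
        (∀ i j : Fin (N + 1), (j : ℕ) = (i : ℕ) + 2 → Odd (i : ℕ) → w i < w j)}
      = Nat.doubleFactorial N := by
  obtain ⟨k, rfl⟩ := hodd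
  exact du_card k
end

section
/- For every Dyck word λ of semilength n, the LS generating polynomial satisfies P_λ · ∏_{c ∈ Chord(λ)} [l(c)] = [n]! in ℤ[q]; equivalently, the sum Σ_f q^{Σ_c f(c)} over all LS-labellings f of λ equals [n]!/∏_{c ∈ Chord(λ)} [l(c)]. In particular, ∏_{c ∈ Chord(λ)} [l(c)] divides [n]! in ℤ[q] and the quotient has nonnegative integer coefficients. -/
/-!
Dyck words, chords, nesting, capacities and Lascoux–Schützenberger labellings.
A step is a `Bool`: `true` = U (up), `false` = D (down).
-/

open scoped BigOperators Classical

noncomputable section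

/-- The height (#U − #D) of the prefix of length `k`. -/
def heightAt (l : List Bool) (k : ℕ) : ℤ :=
  ((l.take k).count true : ℤ) - ((l.take k).count false : ℤ)

/-- `l` is a Dyck word: equally many U's and D's, and every prefix has at least
as many U's as D's. -/
def IsDyckWord (l : List Bool) : Prop :=
  l.count true = l.count false ∧
    ∀ k, (l.take k).count false ≤ (l.take k).count true

/-- `(i,j)` is a chord of `l` (0-indexed matched pair of a U at `i` and a D at `j`
under the standard parenthesis matching). -/
def IsChord (l : List Bool) (i j : ℕ) : Prop :=
  i < j ∧ j < l.length ∧ l.getD i false = true ∧ l.getD j true = false ∧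
    heightAt l (j + 1) = heightAt l i ∧
    ∀ k ∈ Finset.Icc (i + 1) j, heightAt l i < heightAt l k

/-- The finset of chords of `l`. -/
def chords (l : List Bool) : Finset (ℕ × ℕ) :=
  (Finset.range l.length ×ˢ Finset.range l.length).filter fun p => IsChord l p.1 p.2

/-- `c' = (i',j')` is nested in `c = (i,j)` iff `i < i' < j' < j`. -/
def NestedIn (c' c : ℕ × ℕ) : Prop :=
  c.1 < c'.1 ∧ c'.1 < c'.2 ∧ c'.2 < c.2

/-- The length `l(c)` of a chord: one plus the number of chords nested in it. -/
def chordLen (l : List Bool) (c : ℕ × ℕ) : ℕ :=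
  1 + ((chords l).filter fun c' => NestedIn c' c).card

/-- The capacity of a chord: the number of D's strictly before its opening position. -/
def cap (l : List Bool) (c : ℕ × ℕ) : ℕ := (l.take c.1).count false

/-- LS-labellings of `l`: functions on chords (encoded as functions on `ℕ × ℕ`
vanishing off the chords) which weakly increase under nesting and are bounded by
the capacity on leaf chords. -/
def LSLabellings (l : List Bool) : Set ((ℕ × ℕ) → ℕ) :=
  {f | (∀ c, c ∉ chords l → f c = 0) ∧
       (∀ c ∈ chords l, ∀ c' ∈ chords l, NestedIn c' c → f c ≤ f c') ∧
       (∀ c ∈ chords l, (∀ c' ∈ chords l, ¬ NestedIn c' c) → f c ≤ cap l c)}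

/-- The quantum integer [n] = 1 + q + ⋯ + q^{n-1} in ℤ[q]. -/
def qintP (n : ℕ) : Polynomial ℤ := ∑ i ∈ Finset.range n, Polynomial.X ^ i

/-- The quantum factorial [n]! = [1][2]⋯[n] in ℤ[q]. -/
def qfactP (n : ℕ) : Polynomial ℤ := ∏ i ∈ Finset.range n, qintP (i + 1)

/-- The LS generating polynomial P_λ = Σ_f q^{Σ_c f(c)} ∈ ℤ[q], summed over all
LS-labellings f of λ. -/
def PLS (l : List Bool) : Polynomial ℤ :=
  ∑ᶠ f ∈ LSLabellings l, Polynomial.X ^ (∑ c ∈ chords l, f c)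

inductive DT where
  | nil : DT
  | node : DT → DT → DT

namespace DT

def size : DT → ℕ
  | nil => 0
  | node a b => a.size + 1 + b.size

def wd : DT → List Bool
  | nil => []
  | node a b => true :: (a.wd ++ false :: b.wd)

def C : DT → ℕ → Finset (ℕ × ℕ)
  | nil, _ => ∅
  | node a b, o => insert (o, o + 2 * a.size + 1) (C a (o + 1) ∪ C b (o + 2 * a.size + 2))

def OK : DT → ℕ → ℕ → ((ℕ × ℕ) → ℕ) → Prop
  | nil, _, _, _ => True
  | node a b, o, m, f => (∀ c ∈ C a (o + 1), f (o, o + 2 * a.size + 1) ≤ f c) ∧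
      f (o, o + 2 * a.size + 1) ≤ m ∧ OK a (o + 1) m f ∧
      OK b (o + 2 * a.size + 2) (m + a.size + 1) f

def comb (a : DT) (o : ℕ) (x : Σ _ : ℕ, ((ℕ × ℕ) → ℕ) × ((ℕ × ℕ) → ℕ)) : (ℕ × ℕ) → ℕ :=
  fun c => if c = (o, o + 2 * a.size + 1) then x.1 else
    if c ∈ C a (o + 1) then x.2.1 c + x.1 else x.2.2 c

def L : DT → ℕ → ℕ → Finset ((ℕ × ℕ) → ℕ)
  | nil, _, _ => {fun _ => 0}
  | node a b, o, m =>
      ((Finset.range (m + 1)).sigma fun k =>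
        L a (o + 1) (m - k) ×ˢ L b (o + 2 * a.size + 2) (m + a.size + 1)).image (comb a o)

theorem wd_length (t : DT) : t.wd.length = 2 * t.size := by
  induction t with
  | nil => simp [wd, size]
  | node a b ha hb => simp [wd, size, ha, hb]; ring

theorem wd_count_false (t : DT) : t.wd.count false = t.size := by
  induction t with
  | nil => simp [wd, size]
  | node a b ha hb => simp [wd, size, ha, hb]; ring

theorem wd_count_true (t : DT) : t.wd.count true = t.size := by
  induction t with
  | nil => simp [wd, size]
  | node a b ha hb => simp [wd, size, ha, hb]; ring

theorem C_mem (t : DT) : ∀ o, ∀ c ∈ C t o, o ≤ c.1 ∧ c.1 < c.2 ∧ c.2 < o + 2 * t.size := by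
  induction t with
  | nil => simp [C]
  | node a b ha hb =>
    intro o c hc
    simp only [C, Finset.mem_insert, Finset.mem_union] at hc
    simp only [size]
    rcases hc with rfl | hc | hc
    · simp; omega
    · have := ha _ _ hc; omega
    · have := hb _ _ hc; omega

theorem root_notA (a : DT) (o j : ℕ) : (o, j) ∉ C a (o + 1) := fun h => by
  have := C_mem _ _ _ h; simp at this

theorem root_notB (b : DT) (o k j : ℕ) : (o, j) ∉ C b (o + k + 2) := fun h => by
  have := C_mem _ _ _ h; simp at this; omega

theorem disjAB (a b : DT) (o : ℕ) : Disjoint (C a (o + 1)) (C b (o + 2 * a.size + 2)) := by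
  rw [Finset.disjoint_left]
  intro c h1 h2
  have := C_mem _ _ _ h1
  have := C_mem _ _ _ h2
  omega

theorem root_not (a b : DT) (o j : ℕ) :
    (o, j) ∉ C a (o + 1) ∪ C b (o + 2 * a.size + 2) := by
  simp [root_notA, root_notB]

theorem card_C (t : DT) : ∀ o, (C t o).card = t.size := by
  induction t with
  | nil => simp [C, size]
  | node a b ha hb =>
    intro o
    rw [C, Finset.card_insert_of_notMem (root_not a b o _),
      Finset.card_union_of_disjoint (disjAB a b o), ha, hb, size]; ring

theorem OK_congr (t : DT) : ∀ o m f g, (∀ c ∈ C t o, f c = g c) → OK t o m f → OK t o m g := by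
  induction t with
  | nil => simp [OK]
  | node a b ha hb =>
    intro o m f g h hf
    simp only [C, Finset.mem_insert, Finset.mem_union] at h
    obtain ⟨h1, h2, h3, h4⟩ := hf
    have e := h _ (Or.inl rfl)
    refine ⟨fun c hc => ?_, e ▸ h2, ha _ _ f g (fun c hc => h c (Or.inr (Or.inl hc))) h3,
      hb _ _ f g (fun c hc => h c (Or.inr (Or.inr hc))) h4⟩
    rw [← e, ← h c (Or.inr (Or.inl hc))]
    exact h1 c hc

theorem OK_shift (t : DT) : ∀ o m k f, k ≤ m →
    (OK t o m (fun c => f c + k) ↔ OK t o (m - k) f) := by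
  induction t with
  | nil => simp [OK]
  | node a b ha hb =>
    intro o m k f h
    have e : m - k + a.size + 1 = m + a.size + 1 - k := by omega
    simp only [OK, add_le_add_iff_right, e]
    rw [ha _ _ _ _ h, hb _ _ _ _ (by omega)]
    have : f (o, o + 2 * a.size + 1) + k ≤ m ↔ f (o, o + 2 * a.size + 1) ≤ m - k := by omega
    rw [this]

theorem mem_L (t : DT) : ∀ o m f, f ∈ L t o m ↔ (∀ c, c ∉ C t o → f c = 0) ∧ OK t o m f := by
  induction t with
  | nil => intro o m f; simp [L, C, OK, funext_iff]
  | node a b ha hb =>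
    intro o m f
    simp only [L, Finset.mem_image, Finset.mem_sigma, Finset.mem_range, Finset.mem_product, ha, hb]
    have hAB : ∀ c, c ∈ C a (o + 1) → c ∉ C b (o + 2 * a.size + 2) :=
      fun c h => Finset.disjoint_left.1 (disjAB a b o) h
    constructor
    · rintro ⟨⟨k, g, h⟩, ⟨hk, ⟨hg0, hg⟩, hh0, hh⟩, rfl⟩
      simp only at hk hg0 hg hh0 hh
      have hr : comb a o ⟨k, g, h⟩ (o, o + 2 * a.size + 1) = k := by simp [comb]
      have hA : ∀ c ∈ C a (o + 1), comb a o ⟨k, g, h⟩ c = g c + k := by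
        intro c hc
        have : c ≠ (o, o + 2 * a.size + 1) := by rintro rfl; exact root_notA _ _ _ hc
        simp [comb, this, hc]
      have hB : ∀ c ∈ C b (o + 2 * a.size + 2), comb a o ⟨k, g, h⟩ c = h c := by
        intro c hc
        have : c ≠ (o, o + 2 * a.size + 1) := by rintro rfl; exact root_notB _ _ _ _ hc
        have h2 : c ∉ C a (o + 1) := fun h' => hAB c h' hc
        simp [comb, this, h2]
      refine ⟨?_, ?_, ?_, ?_, ?_⟩
      · intro c hc
        simp only [C, Finset.mem_insert, Finset.mem_union, not_or] at hc
        simp [comb, hc, hh0]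
      · intro c hc
        rw [hr, hA c hc]; omega
      · rw [hr]; omega
      · exact OK_congr _ _ _ _ _ (fun c hc => (hA c hc).symm)
          ((OK_shift a _ _ _ g (by omega)).2 hg)
      · exact OK_congr _ _ _ _ _ (fun c hc => (hB c hc).symm) hh
    · rintro ⟨h0, h1, h2, h3, h4⟩
      refine ⟨⟨f (o, o + 2 * a.size + 1),
        fun c => if c ∈ C a (o + 1) then f c - f (o, o + 2 * a.size + 1) else 0,
        fun c => if c ∈ C b (o + 2 * a.size + 2) then f c else 0⟩,
        ⟨Nat.lt_succ_of_le h2, ⟨fun c hc => by simp [hc], ?_⟩, fun c hc => by simp [hc], ?_⟩, ?_⟩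
      · rw [← OK_shift a _ _ _ _ h2]
        refine OK_congr _ _ _ f _ (fun c hc => ?_) h3
        have := h1 c hc
        simp [hc]; omega
      · refine OK_congr _ _ _ f _ (fun c hc => ?_) h4
        simp [hc]
      · funext c
        simp only [comb]
        split_ifs with q1 q2 q3
        · rw [q1]
        · have := h1 c q2
          omega
        · rfl
        · exact (h0 c (by simp [C, q1, q2, q3])).symm

theorem comb_inj (a b : DT) (o m : ℕ) : Set.InjOn (comb a o)
    (((Finset.range (m + 1)).sigma fun k =>
        L a (o + 1) (m - k) ×ˢ L b (o + 2 * a.size + 2) (m + a.size + 1) :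
        Finset (Σ _ : ℕ, ((ℕ × ℕ) → ℕ) × ((ℕ × ℕ) → ℕ))) : Set _) := by
  rintro ⟨k, g, h⟩ hx ⟨k', g', h'⟩ hx' e
  simp only [Finset.mem_coe, Finset.mem_sigma, Finset.mem_product, mem_L] at hx hx'
  obtain ⟨-, ⟨hg, -⟩, hh, -⟩ := hx
  obtain ⟨-, ⟨hg', -⟩, hh', -⟩ := hx'
  have hAB : ∀ c, c ∈ C a (o + 1) → c ∉ C b (o + 2 * a.size + 2) :=
      fun c h => Finset.disjoint_left.1 (disjAB a b o) h
  have ek : k = k' := by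
    have := congrFun e (o, o + 2 * a.size + 1)
    simpa [comb] using this
  subst ek
  have eg : g = g' := by
    funext c
    by_cases hc : c ∈ C a (o + 1)
    · have n : c ≠ (o, o + 2 * a.size + 1) := by rintro rfl; exact root_notA _ _ _ hc
      have := congrFun e c
      simpa [comb, n, hc] using this
    · rw [hg c hc, hg' c hc]
  have eh : h = h' := by
    funext c
    by_cases hc : c ∈ C b (o + 2 * a.size + 2)
    · have n : c ≠ (o, o + 2 * a.size + 1) := by rintro rfl; exact root_notB _ _ _ _ hc
      have n2 : c ∉ C a (o + 1) := fun h' => hAB c h' hc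
      have := congrFun e c
      simpa [comb, n, n2] using this
    · rw [hh c hc, hh' c hc]
  rw [eg, eh]

def F : DT → ℕ → Polynomial ℤ
  | nil, _ => 1
  | node a b, m => (∑ k ∈ Finset.range (m + 1), Polynomial.X ^ (k * (a.size + 1)) * F a (m - k)) *
      F b (m + a.size + 1)

theorem sum_L (t : DT) : ∀ o m, ∑ f ∈ L t o m, (Polynomial.X : Polynomial ℤ) ^ (∑ c ∈ C t o, f c)
    = F t m := by
  induction t with
  | nil => intro o m; simp [L, C, F]
  | node a b ha hb =>
    intro o m
    rw [L, Finset.sum_image (comb_inj a b o m), Finset.sum_sigma, F, Finset.sum_mul]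
    refine Finset.sum_congr rfl fun k hk => ?_
    rw [← ha (o + 1) (m - k), ← hb (o + 2 * a.size + 2) (m + a.size + 1), mul_assoc,
      Finset.sum_mul_sum, Finset.mul_sum, Finset.sum_product]
    refine Finset.sum_congr rfl fun g hg => ?_
    rw [Finset.mul_sum]
    refine Finset.sum_congr rfl fun h hh => ?_
    rw [← pow_add, ← pow_add]
    congr 1
    rw [C, Finset.sum_insert (root_not a b o _), Finset.sum_union (disjAB a b o)]
    have e1 : ∑ c ∈ C a (o + 1), comb a o ⟨k, g, h⟩ c = ∑ c ∈ C a (o + 1), g c + a.size * k := by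
      rw [← card_C a (o + 1), ← smul_eq_mul, ← Finset.sum_const, ← Finset.sum_add_distrib]
      refine Finset.sum_congr rfl fun c hc => ?_
      have n : c ≠ (o, o + 2 * a.size + 1) := by rintro rfl; exact root_notA _ _ _ hc
      simp [comb, n, hc]
    have e2 : ∑ c ∈ C b (o + 2 * a.size + 2), comb a o ⟨k, g, h⟩ c =
        ∑ c ∈ C b (o + 2 * a.size + 2), h c := by
      refine Finset.sum_congr rfl fun c hc => ?_
      have n : c ≠ (o, o + 2 * a.size + 1) := by rintro rfl; exact root_notB _ _ _ _ hc
      have n2 : c ∉ C a (o + 1) := fun h' => Finset.disjoint_left.1 (disjAB a b o) h' hc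
      simp [comb, n, n2]
    have e3 : comb a o ⟨k, g, h⟩ (o, o + 2 * a.size + 1) = k := by simp [comb]
    rw [e1, e2, e3]; ring

def R (a m : ℕ) : Polynomial ℤ := ∏ i ∈ Finset.range a, qintP (m + i + 1)

theorem qint_add (a b : ℕ) : qintP (a + b) = qintP a + Polynomial.X ^ a * qintP b := by
  simp only [qintP, Finset.sum_range_add, Finset.mul_sum, pow_add]

theorem R_add (a b m : ℕ) : R (a + b) m = R a m * R b (m + a) := by
  simp only [R, Finset.prod_range_add]
  congr 1
  refine Finset.prod_congr rfl fun i _ => ?_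
  congr 1; ring

theorem hockey (a m : ℕ) : (∑ k ∈ Finset.range (m + 1),
    Polynomial.X ^ (k * (a + 1)) * R a (m - k)) * qintP (a + 1) = R (a + 1) m := by
  induction m with
  | zero => simp [R, Finset.prod_range_succ]
  | succ m ih =>
    rw [Finset.sum_range_succ']
    have e : ∑ k ∈ Finset.range (m + 1), (Polynomial.X : Polynomial ℤ) ^ ((k + 1) * (a + 1)) *
        R a (m + 1 - (k + 1)) = Polynomial.X ^ (a + 1) * ∑ k ∈ Finset.range (m + 1),
    Polynomial.X ^ (k * (a + 1)) * R a (m - k) := by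
      rw [Finset.mul_sum]
      refine Finset.sum_congr rfl fun k _ => ?_
      rw [Nat.add_sub_add_right]; ring
    rw [e, add_mul, mul_assoc, ih]
    have h1 : R (a + 1) m = qintP (m + 1) * R a (m + 1) := by
      rw [add_comm a 1, R_add]; simp [R]
    have h2 : R (a + 1) (m + 1) = R a (m + 1) * (qintP (a + 1) + Polynomial.X ^ (a + 1) * qintP (m + 1)) := by
      rw [R_add, ← qint_add]; simp only [R, Finset.prod_range_one]; congr 2; ring
    rw [h1, h2]; simp; ring

def Dn : DT → Polynomial ℤ
  | nil => 1
  | node a b => qintP (a.size + 1) * (Dn a * Dn b)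

theorem F_Dn (t : DT) : ∀ m, F t m * Dn t = R t.size m := by
  induction t with
  | nil => simp [F, Dn, R, size]
  | node a b ha hb =>
    intro m
    rw [size, R_add, ← hockey, ← add_assoc, ← hb, F, Dn]
    simp only [← ha]
    have : ∑ k ∈ Finset.range (m + 1), (Polynomial.X : Polynomial ℤ) ^ (k * (a.size + 1)) *
      (F a (m - k) * Dn a) = (∑ k ∈ Finset.range (m + 1), Polynomial.X ^ (k * (a.size + 1)) *
      F a (m - k)) * Dn a := by
      rw [Finset.sum_mul]
      exact Finset.sum_congr rfl fun k _ => by ring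
    rw [this]; ring

theorem prod_C (t : DT) : ∀ o, ∏ c ∈ C t o, qintP (1 + ((C t o).filter fun c' => NestedIn c' c).card)
    = Dn t := by
  induction t with
  | nil => simp [C, Dn]
  | node a b ha hb =>
    intro o
    rw [C, Finset.prod_insert (root_not a b o _), Finset.prod_union (disjAB a b o), Dn,
      ← ha (o + 1), ← hb (o + 2 * a.size + 2)]
    congr 1
    · rw [add_comm a.size 1]
      conv_rhs => rw [← card_C a (o + 1)]
      refine congrArg (fun S : Finset (ℕ × ℕ) => qintP (1 + S.card)) ?_
      ext c
      simp only [Finset.mem_filter, Finset.mem_insert, Finset.mem_union]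
      simp only [NestedIn]
      constructor
      · rintro ⟨rfl | h | h, h2⟩
        · simp at h2
        · exact h
        · have := C_mem _ _ _ h; omega
      · intro h
        have := C_mem _ _ _ h
        exact ⟨Or.inr (Or.inl h), by omega⟩
    congr 1
    · refine Finset.prod_congr rfl fun c hc => ?_
      refine congrArg (fun S : Finset (ℕ × ℕ) => qintP (1 + S.card)) ?_
      have := C_mem _ _ _ hc
      ext d
      simp only [Finset.mem_filter, Finset.mem_insert, Finset.mem_union]
      simp only [NestedIn]
      constructor
      · rintro ⟨rfl | h | h, h2⟩
        · simp at h2; omega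
        · exact ⟨h, h2⟩
        · have := C_mem _ _ _ h; omega
      · rintro ⟨h, h2⟩
        exact ⟨Or.inr (Or.inl h), h2⟩
    · refine Finset.prod_congr rfl fun c hc => ?_
      refine congrArg (fun S : Finset (ℕ × ℕ) => qintP (1 + S.card)) ?_
      have := C_mem _ _ _ hc
      ext d
      simp only [Finset.mem_filter, Finset.mem_insert, Finset.mem_union]
      simp only [NestedIn]
      constructor
      · rintro ⟨rfl | h | h, h2⟩
        · simp at h2; omega
        · have := C_mem _ _ _ h; omega
        · exact ⟨h, h2⟩
      · rintro ⟨h, h2⟩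
        exact ⟨Or.inr (Or.inr h), h2⟩

theorem OK_iff (t : DT) : ∀ (p s l : List Bool) f, l = p ++ (t.wd ++ s) →
    (OK t p.length (p.count false) f ↔
      (∀ c ∈ C t p.length, ∀ c' ∈ C t p.length, NestedIn c' c → f c ≤ f c') ∧
      (∀ c ∈ C t p.length, (∀ c' ∈ C t p.length, ¬ NestedIn c' c) → f c ≤ cap l c)) := by
  induction t with
  | nil => simp [OK, C]
  | node a b ha hb =>
    intro p s l f hl
    have iA := ha (p ++ [true]) (false :: (b.wd ++ s)) l f (by simp [hl, wd])
    have iB := hb (p ++ true :: (a.wd ++ [false])) s l f (by simp [hl, wd])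
    have q1 : (p ++ [true]).length = p.length + 1 := by simp
    have q2 : (p ++ [true]).count false = p.count false := by simp
    have q3 : (p ++ true :: (a.wd ++ [false])).length = p.length + 2 * a.size + 2 := by
      simp [wd_length]; ring
    have q4 : (p ++ true :: (a.wd ++ [false])).count false = p.count false + a.size + 1 := by
      simp [wd_count_false]; ring
    rw [q1, q2] at iA
    rw [q3, q4] at iB
    have hcap : ∀ j, cap l (p.length, j) = p.count false := by
      intro j; simp [cap, hl]
    rw [OK, iA, iB]
    generalize p.length = o at *
    simp only [C, Finset.mem_insert, Finset.mem_union]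
    constructor
    · rintro ⟨h1, h2, ⟨h3, h4⟩, h5, h6⟩
      constructor
      · rintro c hc c' hc' hn
        rcases hc with rfl | hc | hc
        · rcases hc' with rfl | hc' | hc'
          · exact le_rfl
          · exact h1 _ hc'
          · have := C_mem _ _ _ hc'; simp only [NestedIn] at hn; omega
        · have u := C_mem _ _ _ hc
          rcases hc' with rfl | hc' | hc'
          · simp only [NestedIn] at hn; omega
          · exact h3 _ hc _ hc' hn
          · have := C_mem _ _ _ hc'; simp only [NestedIn] at hn; omega
        · have u := C_mem _ _ _ hc
          rcases hc' with rfl | hc' | hc'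
          · simp only [NestedIn] at hn; omega
          · have := C_mem _ _ _ hc'; simp only [NestedIn] at hn; omega
          · exact h5 _ hc _ hc' hn
      · rintro c (rfl | hc | hc) hn
        · rw [hcap]; exact h2
        · exact h4 c hc fun c' hc' => hn c' (Or.inr (Or.inl hc'))
        · exact h6 c hc fun c' hc' => hn c' (Or.inr (Or.inr hc'))
    · rintro ⟨h1, h2⟩
      have k1 : ∀ c ∈ C a (o + 1), f (o, o + 2 * a.size + 1) ≤ f c := by
        intro c hc
        refine h1 _ (Or.inl rfl) c (Or.inr (Or.inl hc)) ?_
        have := C_mem _ _ _ hc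
        simp only [NestedIn]; omega
      have k3 : ∀ c ∈ C a (o + 1), (∀ c' ∈ C a (o + 1), ¬ NestedIn c' c) → f c ≤ cap l c := by
        intro c hc hn
        refine h2 c (Or.inr (Or.inl hc)) ?_
        have u := C_mem _ _ _ hc
        rintro c' (rfl | hc' | hc')
        · simp only [NestedIn]; omega
        · exact hn _ hc'
        · have := C_mem _ _ _ hc'; simp only [NestedIn]; omega
      have k2 : ∀ c ∈ C a (o + 1), ∀ c' ∈ C a (o + 1), NestedIn c' c → f c ≤ f c' :=
        fun c hc c' hc' hn => h1 c (Or.inr (Or.inl hc)) c' (Or.inr (Or.inl hc')) hn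
      refine ⟨k1, ?_, ⟨k2, k3⟩, fun c hc c' hc' hn => h1 c (Or.inr (Or.inr hc)) c' (Or.inr (Or.inr hc')) hn, ?_⟩
      · have hOK := iA.2 ⟨k2, k3⟩
        cases a with
        | nil =>
          rw [← hcap]
          refine h2 _ (Or.inl rfl) ?_
          rintro c' (rfl | hc' | hc')
          · simp [NestedIn]
          · simp [C] at hc'
          · have := C_mem _ _ _ hc'; simp only [NestedIn]; omega
        | node x y =>
          exact (k1 _ (Finset.mem_insert_self _ _)).trans hOK.2.1
      · intro c hc hn
        refine h2 c (Or.inr (Or.inr hc)) ?_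
        have u := C_mem _ _ _ hc
        rintro c' (rfl | hc' | hc')
        · simp only [NestedIn]; omega
        · have := C_mem _ _ _ hc'; simp only [NestedIn]; omega
        · exact hn _ hc'

theorem height_app (p x : List Bool) (k : ℕ) :
    heightAt (p ++ x) (p.length + k) = heightAt p p.length + heightAt x k := by
  simp [heightAt, List.take_append, List.take_of_length_le (Nat.le_add_right p.length k)]; ring

theorem height_wd_nonneg (t : DT) : ∀ s k, k ≤ 2 * t.size → 0 ≤ heightAt (t.wd ++ s) k := by
  induction t with
  | nil => intro s k hk; simp [size] at hk; simp [heightAt, hk]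
  | node a b ha hb =>
    intro s k hk
    rcases k with _ | k
    · simp [heightAt]
    have e : (node a b).wd ++ s = [true] ++ (a.wd ++ (false :: (b.wd ++ s))) := by simp [wd]
    have h1 : heightAt [true] 1 = 1 := by simp [heightAt]
    by_cases hk2 : k ≤ 2 * a.size
    · rw [e, add_comm k 1]
      have := height_app [true] (a.wd ++ (false :: (b.wd ++ s))) k
      simp only [List.length_singleton] at this
      rw [this, h1]
      have := ha (false :: (b.wd ++ s)) k hk2
      omega
    · obtain ⟨r, rfl⟩ : ∃ r, k = 2 * a.size + 1 + r := ⟨k - (2 * a.size + 1), by omega⟩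
      have e : (node a b).wd ++ s = (true :: (a.wd ++ [false])) ++ (b.wd ++ s) := by simp [wd]
      have hl : (true :: (a.wd ++ [false])).length = 2 * a.size + 2 := by simp [wd_length]
      have := height_app (true :: (a.wd ++ [false])) (b.wd ++ s) r
      have h0 : heightAt (true :: (a.wd ++ [false])) (true :: (a.wd ++ [false])).length = 0 := by
        simp only [heightAt, List.take_length]
        simp [wd_count_true, wd_count_false]
      rw [h0, hl] at this
      rw [e, show 2 * a.size + 1 + r + 1 = 2 * a.size + 2 + r by ring, this]
      have := hb s r (by simp [size] at hk; omega)
      omega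

theorem chord_unique (l : List Bool) (i j j' : ℕ) (h : IsChord l i j) (h' : IsChord l i j') :
    j = j' := by
  obtain ⟨a1, a2, a3, a4, a5, a6⟩ := h
  obtain ⟨b1, b2, b3, b4, b5, b6⟩ := h'
  rcases lt_trichotomy j j' with h | h | h
  · have := b6 (j + 1) (by simp; omega)
    omega
  · exact h
  · have := a6 (j' + 1) (by simp; omega)
    omega

theorem root_chord (a : DT) (p s : List Bool) :
    IsChord (p ++ true :: (a.wd ++ false :: s)) p.length (p.length + 2 * a.size + 1) := by
  have hk : ∀ k, heightAt (p ++ true :: (a.wd ++ false :: s)) (p.length + k) =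
    heightAt p p.length + heightAt (true :: (a.wd ++ false :: s)) k := fun k => height_app _ _ k
  have hk0 := hk 0
  have e0 : heightAt (true :: (a.wd ++ false :: s)) 0 = 0 := by simp [heightAt]
  rw [add_zero] at hk0
  have hs : ∀ k, heightAt (true :: (a.wd ++ false :: s)) (1 + k) = 1 + heightAt (a.wd ++ false :: s) k := by
    intro k
    have := height_app [true] (a.wd ++ false :: s) k
    simpa [heightAt] using this
  refine ⟨by omega, by simp [wd_length]; omega, by simp, ?_, ?_, ?_⟩
  · rw [List.getD_append_right _ _ _ _ (by omega)]
    rw [show p.length + 2 * a.size + 1 - p.length = a.wd.length + 1 by rw [wd_length]; omega]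
    simp
  · rw [hk0, e0, show p.length + 2 * a.size + 1 + 1 = p.length + (1 + (2 * a.size + 1)) by ring, hk, hs]
    have := height_app a.wd (false :: s) 1
    rw [wd_length] at this
    rw [this]
    have : heightAt a.wd (2 * a.size) = 0 := by
      rw [← wd_length]
      simp only [heightAt, List.take_length]
      simp [wd_count_true, wd_count_false]
    rw [this]
    simp [heightAt]
  · intro k hk'
    rw [Finset.mem_Icc] at hk'
    obtain ⟨r, rfl⟩ : ∃ r, k = p.length + (1 + r) := ⟨k - p.length - 1, by omega⟩
    rw [hk0, hk, e0, hs]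
    have := height_wd_nonneg a (false :: s) r (by omega)
    omega

theorem chord_iff (t : DT) : ∀ (p s l : List Bool), l = p ++ (t.wd ++ s) → ∀ i j, p.length ≤ i →
    i < p.length + 2 * t.size → (IsChord l i j ↔ (i, j) ∈ C t p.length) := by
  induction t with
  | nil => intro p s l hl i j h1 h2; simp [size] at h2; omega
  | node a b ha hb =>
    intro p s l hl i j h1 h2
    have iA := ha (p ++ [true]) (false :: (b.wd ++ s)) l (by simp [hl, wd]) i j
    have iB := hb (p ++ true :: (a.wd ++ [false])) s l (by simp [hl, wd]) i j
    have q1 : (p ++ [true]).length = p.length + 1 := by simp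
    have q3 : (p ++ true :: (a.wd ++ [false])).length = p.length + 2 * a.size + 2 := by
      simp [wd_length]; ring
    rw [q1] at iA
    rw [q3] at iB
    have rc := root_chord a p (b.wd ++ s)
    have hl' : l = p ++ true :: (a.wd ++ false :: (b.wd ++ s)) := by simp [hl, wd]
    rw [← hl'] at rc
    simp only [size] at h2
    simp only [C, Finset.mem_insert, Finset.mem_union, Prod.mk.injEq]
    have nA : (i, j) ∈ C a (p.length + 1) → p.length + 1 ≤ i ∧ i < p.length + 1 + 2 * a.size :=
      fun h => by have := C_mem _ _ _ h; simp at this; omega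
    have nB : (i, j) ∈ C b (p.length + 2 * a.size + 2) → p.length + 2 * a.size + 2 ≤ i :=
      fun h => by have := C_mem _ _ _ h; simp at this; omega
    by_cases c1 : i = p.length
    · subst c1
      constructor
      · intro h; exact Or.inl ⟨rfl, chord_unique _ _ _ _ h rc⟩
      · rintro (⟨-, rfl⟩ | h | h)
        · exact rc
        · have := nA h; omega
        · have := nB h; omega
    by_cases c2 : i < p.length + 1 + 2 * a.size
    · rw [iA (by omega) c2]
      constructor
      · intro h; exact Or.inr (Or.inl h)
      · rintro (⟨h, -⟩ | h | h)
        · omega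
        · exact h
        · have := nB h; omega
    by_cases c3 : i = p.length + 2 * a.size + 1
    · constructor
      · intro h
        have h3 := h.2.2.1
        have h4 := rc.2.2.2.1
        rw [← c3] at h4
        have : i < l.length := h.1.trans h.2.1
        rw [List.getD_eq_getElem _ _ this] at h3 h4
        rw [h3] at h4
        simp at h4
      · rintro (⟨h, -⟩ | h | h)
        · omega
        · have := nA h; omega
        · have := nB h; omega
    · rw [iB (by omega) (by omega)]
      constructor
      · intro h; exact Or.inr (Or.inr h)
      · rintro (⟨h, -⟩ | h | h)
        · omega
        · have := nA h; omega
        · exact h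

theorem chords_wd (t : DT) : chords t.wd = C t 0 := by
  ext ⟨i, j⟩
  have := chord_iff t [] [] t.wd (by simp) i j
  simp only [List.length_nil, zero_add, wd_length] at this
  simp only [chords, Finset.mem_filter, Finset.mem_product, Finset.mem_range, wd_length]
  constructor
  · rintro ⟨⟨h1, h2⟩, h3⟩
    exact (this (by omega) h1).1 h3
  · intro h
    have u := C_mem _ _ _ h
    simp at u
    exact ⟨⟨by omega, by omega⟩, (this (by omega) (by omega)).2 h⟩

theorem LS_wd (t : DT) : LSLabellings t.wd = (L t 0 0 : Set _) := by
  ext f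
  have := OK_iff t [] [] t.wd f (by simp)
  simp only [List.length_nil, List.count_nil] at this
  rw [Finset.mem_coe, mem_L, this, LSLabellings, chords_wd]
  rfl

theorem main_wd (t : DT) :
    PLS t.wd * (∏ c ∈ chords t.wd, qintP (chordLen t.wd c)) = qfactP t.size := by
  have h1 : PLS t.wd = F t 0 := by
    rw [PLS, LS_wd, finsum_mem_coe_finset, chords_wd, sum_L]
  have h2 : ∏ c ∈ chords t.wd, qintP (chordLen t.wd c) = Dn t := by
    simp only [chordLen, chords_wd, prod_C]
  rw [h1, h2, F_Dn]
  simp [R, qfactP]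

def bs : DyckStep → Bool
  | DyckStep.U => true
  | DyckStep.D => false

def sb : Bool → DyckStep
  | true => DyckStep.U
  | false => DyckStep.D

theorem exists_dw : ∀ n (w : DyckWord), w.semilength = n → ∃ t : DT, w.toList.map bs = t.wd := by
  intro n
  induction n using Nat.strong_induction_on with
  | _ n ih =>
    intro w hw
    by_cases h : w = 0
    · subst h; exact ⟨nil, rfl⟩
    · obtain ⟨a, ha⟩ := ih _ (hw ▸ DyckWord.semilength_insidePart_lt h) _ rfl
      obtain ⟨b, hb⟩ := ih _ (hw ▸ DyckWord.semilength_outsidePart_lt h) _ rfl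
      refine ⟨node a b, ?_⟩
      rw [← DyckWord.nest_insidePart_add_outsidePart h, wd, ← ha, ← hb]
      have : ∀ x y : DyckWord, (x + y).toList = x.toList ++ y.toList := fun _ _ => rfl
      rw [this]
      simp [DyckWord.nest, bs]

theorem sb_inj : Function.Injective sb := by
  intro a b; cases a <;> cases b <;> simp [sb]

theorem exists_wd (l : List Bool) (h : IsDyckWord l) : ∃ t : DT, l = t.wd := by
  have hU : ∀ x : List Bool, (x.map sb).count DyckStep.U = x.count true := fun x =>
    List.count_map_of_injective x sb sb_inj true
  have hD : ∀ x : List Bool, (x.map sb).count DyckStep.D = x.count false := fun x =>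
    List.count_map_of_injective x sb sb_inj false
  obtain ⟨t, ht⟩ := exists_dw _ ⟨l.map sb, by rw [hU, hD]; exact h.1,
    fun i => by rw [← List.map_take, hU, hD]; exact h.2 i⟩ rfl
  refine ⟨t, ?_⟩
  rw [← ht]
  have : bs ∘ sb = id := by funext x; cases x <;> rfl
  simp [this]

end DT

theorem stmt_8 (n : ℕ) (l : List Bool) (hd : IsDyckWord l) (hlen : l.length = 2 * n) :
    PLS l * (∏ c ∈ chords l, qintP (chordLen l c)) = qfactP n ∧
      (∏ c ∈ chords l, qintP (chordLen l c)) ∣ qfactP n := by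
  obtain ⟨t, rfl⟩ := DT.exists_wd l hd
  have hn : t.size = n := by
    have := DT.wd_length t
    omega
  have := DT.main_wd t
  rw [hn] at this
  exact ⟨this, Dvd.intro_left _ this⟩
end
end

section
/- Let λ be a Dyck word of semilength n. Then the LS generating polynomial of the Dyck word UλD (of semilength n+1) equals that of λ: P_{UλD} = P_λ in ℤ[q]. -/
/-!
Dyck words, chords, nesting, capacities and Lascoux–Schützenberger labellings.
A step is a `Bool`: `true` = U (up), `false` = D (down).
-/

open scoped BigOperators Classical

noncomputable section

theorem aux_h (l : List Bool) (k : ℕ) (hk : k ≤ l.length) :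
    heightAt (true :: (l ++ [false])) (k + 1) = 1 + heightAt l k := by
  simp [heightAt, List.take_append_of_le_length hk]
  ring

theorem aux_nonneg (l : List Bool) (hd : IsDyckWord l) (k : ℕ) : 0 ≤ heightAt l k := by
  have := hd.2 k
  unfold heightAt
  omega

theorem aux_hend (l : List Bool) (hd : IsDyckWord l) :
    heightAt (true :: (l ++ [false])) (l.length + 1 + 1) = 0 := by
  have h1 := hd.1
  have : (true :: (l ++ [false])).take (l.length + 1 + 1) = true :: (l ++ [false]) :=
    List.take_of_length_le (by simp)
  unfold heightAt
  rw [this]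
  simp [h1]

theorem aux_h0 (l : List Bool) : heightAt l 0 = 0 := by simp [heightAt]

theorem mem_chords_iff (l : List Bool) (c : ℕ × ℕ) : c ∈ chords l ↔ IsChord l c.1 c.2 := by
  simp only [chords, Finset.mem_filter, Finset.mem_product, Finset.mem_range]
  constructor
  · exact fun h => h.2
  · intro h
    have h1 := h.1
    have h2 := h.2.1
    exact ⟨⟨by omega, by omega⟩, h⟩

theorem aux_zero (l : List Bool) (hd : IsDyckWord l) (b : ℕ) :
    IsChord (true :: (l ++ [false])) 0 b ↔ b = l.length + 1 := by
  constructor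
  · rintro ⟨h1, h2, -, -, h5, -⟩
    simp at h2
    by_contra hb
    rw [aux_h l b (by omega), aux_h0] at h5
    have := aux_nonneg l hd b
    omega
  · rintro rfl
    refine ⟨by omega, by simp, by simp, by simp, ?_, ?_⟩
    · rw [aux_hend l hd, aux_h0]
    · intro k hk
      rw [Finset.mem_Icc] at hk
      obtain ⟨k, rfl⟩ : ∃ k', k = k' + 1 := ⟨k - 1, by omega⟩
      rw [aux_h l k (by omega), aux_h0]
      have := aux_nonneg l hd k
      omega

theorem aux_succ (l : List Bool) (hd : IsDyckWord l) (i j : ℕ) :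
    IsChord (true :: (l ++ [false])) (i + 1) (j + 1) ↔ IsChord l i j := by
  have key : i < j → j < l.length →
      (IsChord (true :: (l ++ [false])) (i + 1) (j + 1) ↔ IsChord l i j) := by
    intro hij hj
    have e1 : (true :: (l ++ [false])).getD (i + 1) false = l.getD i false := by
      rw [List.getD_cons_succ, List.getD_append _ _ _ _ (by omega)]
    have e2 : (true :: (l ++ [false])).getD (j + 1) true = l.getD j true := by
      rw [List.getD_cons_succ, List.getD_append _ _ _ _ (by omega)]
    unfold IsChord
    rw [e1, e2, aux_h l (j + 1) (by omega), aux_h l i (by omega)]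
    have e3 : (∀ k ∈ Finset.Icc (i + 1 + 1) (j + 1),
          1 + heightAt l i < heightAt (true :: (l ++ [false])) k) ↔
        ∀ k ∈ Finset.Icc (i + 1) j, heightAt l i < heightAt l k := by
      constructor
      · intro h k hk
        rw [Finset.mem_Icc] at hk
        have := h (k + 1) (by rw [Finset.mem_Icc]; omega)
        rw [aux_h l k (by omega)] at this
        omega
      · intro h k hk
        rw [Finset.mem_Icc] at hk
        obtain ⟨k, rfl⟩ : ∃ k', k = k' + 1 := ⟨k - 1, by omega⟩
        have := h k (by rw [Finset.mem_Icc]; omega)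
        rw [aux_h l k (by omega)]
        omega
    rw [e3]
    have e4 : (1 + heightAt l (j + 1) = 1 + heightAt l i) ↔
      (heightAt l (j + 1) = heightAt l i) := by omega
    rw [e4]
    have e5 : j + 1 < (true :: (l ++ [false])).length := by simp; omega
    have e6 : i + 1 < j + 1 := by omega
    simp only [e5, e6, hij, hj, true_and]
  constructor
  · intro h
    have h1 := h.1
    have h2 := h.2.1
    simp at h2
    have : j < l.length := by
      by_contra hj
      have hj' : j = l.length := by omega
      have h5 := h.2.2.2.2.1
      rw [hj', aux_hend l hd, aux_h l i (by omega)] at h5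
      have := aux_nonneg l hd i
      omega
    exact (key (by omega) this).1 h
  · intro h
    exact (key h.1 h.2.1).2 h

/-- The shift of chords. -/
def shiftE : (ℕ × ℕ) ↪ (ℕ × ℕ) :=
  ⟨fun p => (p.1 + 1, p.2 + 1), fun p q h => by
    simp only [Prod.mk.injEq] at h
    ext <;> omega⟩

theorem shiftE_apply (p : ℕ × ℕ) : shiftE p = (p.1 + 1, p.2 + 1) := rfl

theorem aux_chords (l : List Bool) (hd : IsDyckWord l) :
    chords (true :: (l ++ [false])) = insert (0, l.length + 1) ((chords l).map shiftE) := by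
  ext ⟨a, b⟩
  rw [mem_chords_iff, Finset.mem_insert, Finset.mem_map]
  rcases a with _ | a
  · simp [aux_zero l hd, shiftE_apply]
  · rcases b with _ | b
    · constructor
      · intro h
        exact absurd h.1 (by simp)
      · simp [shiftE_apply]
    · simp only [aux_succ l hd]
      constructor
      · intro h
        exact Or.inr ⟨(a, b), (mem_chords_iff _ _).2 h, rfl⟩
      · rintro (h | ⟨⟨x, y⟩, hx, h⟩)
        · simp at h
        · simp [shiftE_apply] at h
          rw [← h.1, ← h.2]
          exact (mem_chords_iff _ _).1 hx

theorem aux_split (t : List Bool) (h : false ∈ t) :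
    ∃ m s, t = List.replicate m true ++ false :: s := by
  induction t with
  | nil => simp at h
  | cons a t ih =>
    cases a with
    | false => exact ⟨0, t, by simp⟩
    | true =>
      obtain ⟨m, s, hs⟩ := ih (by simpa using h)
      exact ⟨m + 1, s, by rw [hs, List.replicate_succ]; rfl⟩

theorem aux_leaf (t : List Bool) (h : false ∈ t) :
    ∃ m, IsChord (true :: t) m (m + 1) ∧ cap (true :: t) (m, m + 1) = 0 := by
  obtain ⟨m, s, rfl⟩ := aux_split t h
  have e : true :: (List.replicate m true ++ false :: s) =
      List.replicate m true ++ true :: false :: s := by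
    rw [← List.cons_append, ← List.replicate_succ, List.replicate_succ']
    simp
  rw [e]
  have t0 : (List.replicate m true ++ true :: false :: s).take m = List.replicate m true := by
    rw [List.take_append_of_le_length (by simp)]; simp
  have t1 : (List.replicate m true ++ true :: false :: s).take (m + 1) =
      List.replicate m true ++ [true] := by
    rw [List.take_append]; simp
  have t2 : (List.replicate m true ++ true :: false :: s).take (m + 1 + 1) =
      List.replicate m true ++ [true, false] := by
    rw [List.take_append]; simp [add_assoc]
  have c0 : (List.replicate m true).count false = 0 := by simp [List.count_replicate]
  have H0 : heightAt (List.replicate m true ++ true :: false :: s) m = m := by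
    simp [heightAt, t0, c0]
  have H1 : heightAt (List.replicate m true ++ true :: false :: s) (m + 1) = m + 1 := by
    simp [heightAt, t1, c0]
  have H2 : heightAt (List.replicate m true ++ true :: false :: s) (m + 1 + 1) = m := by
    simp [heightAt, t2, c0]
  refine ⟨m, ⟨by omega, by simp, ?_, ?_, ?_, ?_⟩, ?_⟩
  · rw [List.getD_append_right _ _ _ _ (by simp)]; simp
  · rw [List.getD_append_right _ _ _ _ (by simp)]; simp
  · rw [H0, H2]
  · intro k hk
    rw [Finset.mem_Icc] at hk
    obtain rfl : k = m + 1 := by omega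
    rw [H0, H1]; omega
  · simp [cap, t0, c0]

theorem aux_outer (l : List Bool) (hd : IsDyckWord l) (f : ℕ × ℕ → ℕ)
    (hf : f ∈ LSLabellings (true :: (l ++ [false]))) : f (0, l.length + 1) = 0 := by
  obtain ⟨m, hm, hc⟩ := aux_leaf (l ++ [false]) (by simp)
  obtain ⟨-, h2, h3⟩ := hf
  have hmem := (mem_chords_iff (true :: (l ++ [false])) (m, m + 1)).2 hm
  have h4 := h3 _ hmem (by
    rintro c' - ⟨h1, h2, h3⟩
    simp only at h1 h3
    omega)
  rw [hc] at h4
  rcases m with _ | m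
  · have := (aux_zero l hd _).1 hm
    rw [← this]; simpa using h4
  · have h5 := h2 (0, l.length + 1) ((mem_chords_iff _ _).2 ((aux_zero l hd _).2 rfl)) _ hmem ?_
    · omega
    · have := ((aux_succ l hd m (m + 1)).1 hm).2.1
      refine ⟨?_, ?_, ?_⟩ <;> simp only <;> omega

theorem aux_mem (l : List Bool) (hd : IsDyckWord l) (c : ℕ × ℕ) :
    shiftE c ∈ chords (true :: (l ++ [false])) ↔ c ∈ chords l := by
  rw [mem_chords_iff, mem_chords_iff]
  exact aux_succ l hd _ _

theorem aux_nested (c c' : ℕ × ℕ) : NestedIn (shiftE c') (shiftE c) ↔ NestedIn c' c := by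
  simp [NestedIn, shiftE_apply]

theorem aux_cap (l : List Bool) (c : ℕ × ℕ) (hc : c ∈ chords l) :
    cap (true :: (l ++ [false])) (shiftE c) = cap l c := by
  rw [mem_chords_iff] at hc
  have h1 := hc.1
  have h2 := hc.2.1
  have : c.1 ≤ l.length := by omega
  simp [cap, shiftE_apply, List.take_append_of_le_length this]

theorem aux_iff (l : List Bool) (hd : IsDyckWord l) (f : ℕ × ℕ → ℕ) :
    f ∈ LSLabellings (true :: (l ++ [false])) ↔
      (∀ c, c ∉ (chords l).map shiftE → f c = 0) ∧ (f ∘ shiftE) ∈ LSLabellings l := by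
  constructor
  · intro hf
    have h0 := aux_outer l hd f hf
    obtain ⟨h1, h2, h3⟩ := hf
    refine ⟨?_, ?_, ?_, ?_⟩
    · intro c hc
      by_cases h : c = (0, l.length + 1)
      · rw [h, h0]
      · apply h1
        rw [aux_chords l hd, Finset.mem_insert]
        tauto
    · intro c hc
      exact h1 _ (by rwa [aux_mem l hd])
    · intro c hc c' hc' hn
      exact h2 _ ((aux_mem l hd c).2 hc) _ ((aux_mem l hd c').2 hc') ((aux_nested _ _).2 hn)
    · intro c hc hl
      rw [← aux_cap l c hc]
      refine h3 _ ((aux_mem l hd c).2 hc) ?_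
      intro c' hc' hn
      rw [aux_chords l hd, Finset.mem_insert, Finset.mem_map] at hc'
      rcases hc' with rfl | ⟨d, hd', rfl⟩
      · exact absurd hn.1 (by simp)
      · exact hl d hd' ((aux_nested _ _).1 hn)
  · rintro ⟨h0, h1, h2, h3⟩
    have hc0 : f (0, l.length + 1) = 0 := by
      apply h0
      simp [shiftE_apply]
    refine ⟨?_, ?_, ?_⟩
    · intro c hc
      apply h0
      rw [aux_chords l hd, Finset.mem_insert] at hc
      tauto
    · intro c hc c' hc' hn
      rw [aux_chords l hd, Finset.mem_insert, Finset.mem_map] at hc hc'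
      rcases hc with rfl | ⟨d, hd', rfl⟩
      · rw [hc0]; omega
      · rcases hc' with rfl | ⟨e, he', rfl⟩
        · exact absurd hn.1 (by simp)
        · exact h2 d hd' e he' ((aux_nested _ _).1 hn)
    · intro c hc hl
      rw [aux_chords l hd, Finset.mem_insert, Finset.mem_map] at hc
      rcases hc with rfl | ⟨d, hd', rfl⟩
      · rw [hc0]; omega
      · rw [aux_cap l d hd']
        refine h3 d hd' ?_
        intro e he hn
        exact hl _ ((aux_mem l hd e).2 he) ((aux_nested _ _).2 hn)

/-- Paper's Lemma `treedel`: the LS generating polynomial of `UλD` equals that of `λ`. -/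
theorem stmt_9 (n : ℕ) (l : List Bool) (hd : IsDyckWord l) (hlen : l.length = 2 * n) :
    PLS (true :: (l ++ [false])) = PLS l := by
  unfold PLS
  refine finsum_mem_eq_of_bijOn (fun f => f ∘ shiftE) ⟨?_, ?_, ?_⟩ ?_
  · intro f hf
    exact ((aux_iff l hd f).1 hf).2
  · intro f hf g hg hfg
    have h1 := ((aux_iff l hd f).1 hf).1
    have h2 := ((aux_iff l hd g).1 hg).1
    funext c
    by_cases hc : c ∈ (chords l).map shiftE
    · obtain ⟨d, -, rfl⟩ := Finset.mem_map.1 hc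
      exact congrFun hfg d
    · rw [h1 c hc, h2 c hc]
  · intro g hg
    have hcomp : (Function.extend shiftE g 0) ∘ shiftE = g :=
      Function.extend_comp shiftE.injective g 0
    refine ⟨Function.extend shiftE g 0, (aux_iff l hd _).2 ⟨?_, ?_⟩, hcomp⟩
    · intro c hc
      by_cases h : ∃ d, shiftE d = c
      · obtain ⟨d, rfl⟩ := h
        rw [shiftE.injective.extend_apply]
        apply hg.1
        intro hd'
        exact hc (Finset.mem_map_of_mem _ hd')
      · rw [Function.extend_apply' _ _ _ h]; rfl
    · rw [hcomp]; exact hg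
  · intro f hf
    have h0 := aux_outer l hd f hf
    rw [aux_chords l hd, Finset.sum_insert (by simp [shiftE_apply]), h0, zero_add, Finset.sum_map]
    rfl
end
end
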